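/- arXiv:1604.07094 — 2 statements merged into one kernel-verified Lean document; each statement's English description precedes it below -/
import Mathlib

section
/- Let n ≥ 3 and let L be a weighted Laplacian of a ring graph on n vertices. Let S = {u₁, u₂, …, u_k} be a nonempty subset of the vertices, listed in clockwise (cyclic) order, and set u_{k+1} = u₁. Then the grounded Laplacian L_ff and every cyclic segment submatrix L_{(u_j→u_{j+1})} appearing below are invertible, and (1/2)·tr(L_ff⁻¹) = Σ_{j=1}^{k} (1/2)·tr(L_{(u_j→u_{j+1})}⁻¹). -/
open Matrix

/-- `L` is a weighted Laplacian of a ring graph on `n + 3` (i.e. `≥ 3`) vertices,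
with indices taken modulo `n + 3` (addition/subtraction in `Fin (n+3)` is cyclic):
symmetric, negative on the two cyclic off-diagonals, zero elsewhere off the diagonal,
and all row sums zero. -/
def IsRingLaplacian {n : ℕ} (L : Matrix (Fin (n + 3)) (Fin (n + 3)) ℝ) : Prop :=
  L.IsSymm ∧
  (∀ i j : Fin (n + 3), j = i + 1 ∨ j = i - 1 → L i j < 0) ∧
  (∀ i j : Fin (n + 3), i ≠ j → j ≠ i + 1 → j ≠ i - 1 → L i j = 0) ∧
  (∀ i : Fin (n + 3), ∑ j, L i j = 0)

/-- The index set of the cyclic segment `(u → v)`: the vertices `u+1, …, v-1` strictly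
between `u` and `v` in clockwise order (all vertices other than `u` when `v = u`). -/
def CSegIdx {N : ℕ} (u v : Fin N) : Type :=
  {w : Fin N // 0 < (w - u).val ∧ (v = u ∨ (w - u).val < (v - u).val)}

instance {N : ℕ} (u v : Fin N) : Fintype (CSegIdx u v) := by
  unfold CSegIdx; infer_instance

instance {N : ℕ} (u v : Fin N) : DecidableEq (CSegIdx u v) := by
  unfold CSegIdx; infer_instance

/-- `L_{(u→v)}`: the principal submatrix of `L` on the vertices strictly between `u` and
`v` in clockwise order. -/
def cseg {N : ℕ} (L : Matrix (Fin N) (Fin N) ℝ) (u v : Fin N) :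
    Matrix (CSegIdx u v) (CSegIdx u v) ℝ :=
  L.submatrix (·.val) (·.val)

/-- The grounded Laplacian `L_ff`. -/
def grounded {N : ℕ} (L : Matrix (Fin N) (Fin N) ℝ) (S : Finset (Fin N)) :
    Matrix {i : Fin N // i ∉ S} {i : Fin N // i ∉ S} ℝ :=
  L.submatrix (·.val) (·.val)

/-!
Grounding the vertices `u i` cuts the ring into the arcs between consecutive grounded vertices.
No edge joins two different arcs, so the grounded matrix is block diagonal with the segment matrices
as blocks, and the trace of the inverse of a block diagonal matrix is the sum of the traces of the
inverses of its blocks.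

Every matrix involved is nonsingular by the maximum principle: a vector in the kernel, extended by
zero to the ring, cannot have a positive maximum, since the maximum would propagate along the ring
to a grounded vertex.
-/

section MaximumPrinciple

variable {V R : Type*} [Fintype V] [Ring R] [LinearOrder R] [IsStrictOrderedRing R]
  {L : Matrix V V R}

theorem eq_of_mulVec_nonpos_of_forall_le {v w : V} (hoff : ∀ w, v ≠ w → L v w ≤ 0)
    (hrow : 0 ≤ ∑ w, L v w) {x : V → R} (hmax : ∀ w, x w ≤ x v) (hpos : 0 ≤ x v)
    (hLx : (L *ᵥ x) v ≤ 0) (hvw : L v w < 0) : x w = x v := by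
  have hterm : ∀ w, 0 ≤ L v w * (x w - x v) := fun w => by
    rcases eq_or_ne v w with rfl | hne
    · simp
    · exact mul_nonneg_of_nonpos_of_nonpos (hoff w hne) (sub_nonpos.mpr (hmax w))
  have hsum : ∑ w, L v w * (x w - x v) ≤ 0 :=
    calc ∑ w, L v w * (x w - x v) = (L *ᵥ x) v - (∑ w, L v w) * x v := by
          simp only [mul_sub, Finset.sum_sub_distrib, Finset.sum_mul, mulVec, dotProduct]
      _ ≤ 0 := sub_nonpos.mpr (hLx.trans (mul_nonneg hrow hpos))
  have hzero : L v w * (x w - x v) = 0 :=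
    (Finset.sum_eq_zero_iff_of_nonneg fun w _ => hterm w).mp
      (hsum.antisymm (Finset.sum_nonneg fun w _ => hterm w)) w (Finset.mem_univ w)
  exact sub_eq_zero.mp ((mul_eq_zero.mp hzero).resolve_left hvw.ne)

theorem nonpos_of_mulVec_nonpos (hoff : ∀ v w, v ≠ w → L v w ≤ 0) (hrow : ∀ v, 0 ≤ ∑ w, L v w)
    {S : Set V} (hreach : ∀ v, ∃ s ∈ S, Relation.ReflTransGen (fun a b => L a b < 0) v s)
    {x : V → R} (hLx : ∀ v ∉ S, (L *ᵥ x) v ≤ 0) (hS : ∀ s ∈ S, x s ≤ 0) (v : V) : x v ≤ 0 := by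
  have : Nonempty V := ⟨v⟩
  obtain ⟨top, htop⟩ := Finite.exists_max x
  refine (htop v).trans (not_lt.mp fun hpos => ?_)
  obtain ⟨s, hs, hpath⟩ := hreach top
  have hconst : x s = x top := by
    clear hs
    induction hpath with
    | refl => rfl
    | @tail b c _ hbc ih =>
      rw [← ih] at htop hpos ⊢
      have hb : b ∉ S := fun hb => (hS b hb).not_gt hpos
      exact eq_of_mulVec_nonpos_of_forall_le (hoff b) (hrow b) htop hpos.le (hLx b hb) hbc
  exact (hS s hs).not_gt (hconst ▸ hpos)

end MaximumPrinciple

theorem det_submatrix_ne_zero_of_reachable {V ι R : Type*} [Fintype V] [Fintype ι] [DecidableEq ι]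
    [CommRing R] [LinearOrder R] [IsStrictOrderedRing R] {L : Matrix V V R}
    (hoff : ∀ v w, v ≠ w → L v w ≤ 0) (hrow : ∀ v, 0 ≤ ∑ w, L v w)
    {f : ι → V} (hf : Function.Injective f)
    (hreach : ∀ v, ∃ s ∉ Set.range f, Relation.ReflTransGen (fun a b => L a b < 0) v s) :
    (L.submatrix f f).det ≠ 0 := by
  intro hdet
  obtain ⟨x, hx, hker⟩ := exists_mulVec_eq_zero_iff.mpr hdet
  set y : V → R := Function.extend f x 0
  have hyf (i : ι) : y (f i) = x i := hf.extend_apply x 0 i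
  have hy : ∀ v ∉ Set.range f, y v = 0 := fun v hv => Function.extend_apply' _ _ _ hv
  have hLy : ∀ v ∈ Set.range f, (L *ᵥ y) v = 0 := by
    rintro _ ⟨i, rfl⟩
    refine Eq.trans ?_ (congrFun hker i)
    refine (Fintype.sum_of_injective f hf _ _ (fun v hv => ?_) fun j => ?_).symm
    · rw [hy v hv, mul_zero]
    · exact congrArg (L (f i) (f j) * ·) (hyf j).symm
  have hle := nonpos_of_mulVec_nonpos hoff hrow hreach
    (fun v hv => (hLy v (not_not.mp hv)).le) (fun v hv => (hy v hv).le)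
  have hge := nonpos_of_mulVec_nonpos hoff hrow hreach (x := -y)
    (fun v hv => by rw [mulVec_neg, Pi.neg_apply, hLy v (not_not.mp hv), neg_zero])
    (fun v hv => by rw [Pi.neg_apply, hy v hv, neg_zero])
  exact hx (funext fun i => hyf i ▸ (hle (f i)).antisymm (neg_nonpos.mp (hge (f i))))

section BlockDiagonal

variable {ι κ R : Type*} {m : κ → Type*} [CommRing R] [Fintype ι] [DecidableEq ι]
  [Fintype κ] [∀ k, Fintype (m k)] [∀ k, DecidableEq (m k)]

theorem inv_blockDiagonal' [DecidableEq κ] (A : ∀ k, Matrix (m k) (m k) R)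
    (hA : ∀ k, IsUnit (A k).det) : (blockDiagonal' A)⁻¹ = blockDiagonal' fun k => (A k)⁻¹ := by
  apply inv_eq_right_inv
  simp only [← blockDiagonal'_mul, mul_nonsing_inv _ (hA _)]
  exact blockDiagonal'_one

theorem trace_inv_eq_sum_trace_inv_blocks (M : Matrix ι ι R) (e : (Σ k, m k) ≃ ι)
    (hM : ∀ k l, k ≠ l → ∀ a b, M (e ⟨k, a⟩) (e ⟨l, b⟩) = 0)
    (hdet : ∀ k, IsUnit (M.submatrix (fun a => e ⟨k, a⟩) (fun a => e ⟨k, a⟩)).det) :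
    M⁻¹.trace = ∑ k, (M.submatrix (fun a => e ⟨k, a⟩) (fun a => e ⟨k, a⟩))⁻¹.trace := by
  classical
  have hblock : M.submatrix e e =
      blockDiagonal' fun k => M.submatrix (fun a => e ⟨k, a⟩) (fun a => e ⟨k, a⟩) := by
    ext ⟨k, a⟩ ⟨l, b⟩
    rcases eq_or_ne k l with rfl | hkl
    · rw [blockDiagonal'_apply_eq, submatrix_apply, submatrix_apply]
    · rw [blockDiagonal'_apply_ne _ _ _ hkl, submatrix_apply, hM k l hkl]
  calc M⁻¹.trace = (M⁻¹.submatrix e e).trace := (e.sum_comp M⁻¹.diag).symm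
    _ = (M.submatrix e e)⁻¹.trace := by rw [inv_submatrix_equiv]
    _ = _ := by rw [hblock, inv_blockDiagonal' _ hdet, trace_blockDiagonal']

end BlockDiagonal

/-- `d` lies in the gap of the sequence `a` that starts at `a i`: it is strictly above the terms up
to index `i` and strictly below the later ones. For a monotone sequence and a last index `i`, this
is the unbounded gap above `a i`. -/
def InGap {ι α : Type*} [LT α] [Preorder ι] (a : ι → α) (i : ι) (d : α) : Prop :=
  (∀ j ≤ i, a j < d) ∧ ∀ j, i < j → d < a j

namespace InGap

variable {ι α : Type*} [LinearOrder ι] {a : ι → α} {i j : ι} {d d' : α}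

theorem ne [Preorder α] (h : InGap a i d) (j : ι) : a j ≠ d :=
  (le_or_gt j i).elim (fun hj => (h.1 j hj).ne) fun hj => (h.2 j hj).ne'

theorem index_eq_of_wcovBy [Preorder α] (h : InGap a i d) (h' : InGap a j d') (hd : d ⩿ d') :
    i = j := by
  rcases lt_trichotomy i j with hij | hij | hij
  · exact absurd (h'.1 j le_rfl) (hd.2 (h.2 j hij))
  · exact hij
  · exact absurd (hd.1.trans_lt (h'.2 i hij)) (h.1 i le_rfl).not_gt

theorem exists_of_forall_ne [LinearOrder α] [Finite ι] (ha : Monotone a) (hne : ∀ j, a j ≠ d)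
    (hj : a j < d) : ∃ i, InGap a i d := by
  obtain ⟨i, hi, hmax⟩ := (Set.toFinite {i | a i < d}).exists_maximal ⟨j, hj⟩
  refine ⟨i, fun l hl => (ha hl).trans_lt hi, fun l hl => ?_⟩
  exact (hne l).lt_or_gt.resolve_left fun h => (hmax h hl.le).not_gt hl

end InGap

theorem inGap_castSucc_iff {α : Type*} [Preorder α] {k : ℕ} {a : Fin (k + 1) → α}
    (ha : Monotone a) (i : Fin k) (d : α) :
    InGap a i.castSucc d ↔ a i.castSucc < d ∧ d < a i.succ :=
  ⟨fun h => ⟨h.1 _ le_rfl, h.2 _ Fin.castSucc_lt_succ⟩,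
    fun h => ⟨fun _ hj => (ha hj).trans_lt h.1,
      fun _ hj => h.2.trans_le (ha (Fin.castSucc_lt_iff_succ_le.mp hj))⟩⟩

theorem inGap_last_iff {α : Type*} [Preorder α] {k : ℕ} {a : Fin (k + 1) → α}
    (ha : Monotone a) (d : α) : InGap a (Fin.last k) d ↔ a (Fin.last k) < d :=
  ⟨fun h => h.1 _ le_rfl,
    fun h => ⟨fun _ hj => (ha hj).trans_lt h, fun j hj => absurd j.le_last hj.not_ge⟩⟩

section RingSegments

variable {N k : ℕ}

theorem reflTransGen_of_add_one {r : Fin (N + 1) → Fin (N + 1) → Prop}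
    (hr : ∀ v, r v (v + 1)) (v w : Fin (N + 1)) : Relation.ReflTransGen r v w := by
  suffices h : ∀ d, Relation.ReflTransGen r v (v + d) from add_sub_cancel v w ▸ h (w - v)
  intro d
  induction d using Fin.induction with
  | zero => rw [add_zero]
  | succ d ih => exact ih.tail (by rw [← Fin.coeSucc_eq_succ, ← add_assoc]; exact hr _)

theorem wcovBy_add_one_or_add_one_eq_zero (d : Fin (N + 1)) : d ⩿ d + 1 ∨ d + 1 = 0 := by
  rcases eq_or_ne d (Fin.last N) with rfl | hd
  · exact .inr (Fin.last_add_one N)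
  · have hval := Fin.val_add_one_of_lt (Fin.lt_last_iff_ne_last.mpr hd)
    generalize d + 1 = d' at hval ⊢
    exact .inl ⟨by rw [Fin.le_def]; omega, fun c h h' => by rw [Fin.lt_def] at h h'; omega⟩

theorem val_sub_between_iff {p q : Fin N} (hpq : p < q) (z : Fin N) :
    0 < (z - p).val ∧ (z - p).val < (q - p).val ↔ p < z ∧ z < q := by
  rw [Fin.sub_val_of_le hpq.le]
  rcases le_or_gt p z with h | h
  · rw [Fin.sub_val_of_le h]; omega
  · rw [Fin.coe_sub_iff_lt.mpr h]; omega

theorem val_sub_between_zero_iff (p z : Fin (N + 1)) :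
    0 < (z - p).val ∧ (0 = p ∨ (z - p).val < (0 - p).val) ↔ p < z := by
  rcases eq_or_ne 0 p with rfl | hp
  · simp [Fin.pos_iff_ne_zero]
  · have hpos : 0 < p := Fin.pos_iff_ne_zero.mpr hp.symm
    rw [Fin.coe_sub_iff_lt.mpr hpos, Fin.val_zero, or_iff_right hp]
    rcases le_or_gt p z with h | h
    · rw [Fin.sub_val_of_le h]; omega
    · rw [Fin.coe_sub_iff_lt.mpr h]; omega

variable {u : Fin (k + 1) → Fin (N + 1)}

theorem cSegIdx_iff_inGap (hord : StrictMono fun i => u i - u 0) (i : Fin (k + 1))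
    (w : Fin (N + 1)) :
    (0 < (w - u i).val ∧ (u (i + 1) = u i ∨ (w - u i).val < (u (i + 1) - u i).val)) ↔
      InGap (fun j => u j - u 0) i (w - u 0) := by
  rw [← sub_left_inj (a := u 0) (b := u (i + 1)), ← sub_sub_sub_cancel_right w (u i) (u 0),
    ← sub_sub_sub_cancel_right (u (i + 1)) (u i) (u 0)]
  rcases Fin.eq_castSucc_or_eq_last i with ⟨i, rfl⟩ | rfl
  · have hlt : u i.castSucc - u 0 < u i.succ - u 0 := hord Fin.castSucc_lt_succ
    rw [inGap_castSucc_iff hord.monotone, Fin.coeSucc_eq_succ, ← val_sub_between_iff hlt]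
    simp only [hlt.ne', false_or]
  · rw [inGap_last_iff hord.monotone, Fin.last_add_one, sub_self, val_sub_between_zero_iff]

theorem cSegIdx_val_notMem_image (hord : StrictMono fun i => u i - u 0) {i : Fin (k + 1)}
    (w : CSegIdx (u i) (u (i + 1))) : w.val ∉ Finset.image u Finset.univ := by
  simp only [Finset.mem_image, Finset.mem_univ, true_and, not_exists]
  exact fun j hj => ((cSegIdx_iff_inGap hord i w.val).mp w.2).ne j (congrArg (· - u 0) hj)

theorem exists_inGap_of_notMem_image (hord : StrictMono fun i => u i - u 0) {w : Fin (N + 1)}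
    (hw : w ∉ Finset.image u Finset.univ) : ∃ i, InGap (fun j => u j - u 0) i (w - u 0) := by
  simp only [Finset.mem_image, Finset.mem_univ, true_and, not_exists] at hw
  have hpos : u 0 - u 0 < w - u 0 := by
    rw [sub_self, Fin.pos_iff_ne_zero, sub_ne_zero]
    exact Ne.symm (hw 0)
  exact InGap.exists_of_forall_ne hord.monotone (fun j hj => hw j (sub_left_injective hj)) hpos

/-- The segments between consecutive `u i` partition the vertices that are not of the form `u i`.
It identifies the disjoint union of the index types of the blocks `L_{(u i → u (i + 1))}` with the
index type of the grounded matrix. -/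
noncomputable def segmentEquiv (hord : StrictMono fun i => u i - u 0) :
    (Σ i, CSegIdx (u i) (u (i + 1))) ≃ {w // w ∉ Finset.image u Finset.univ} :=
  Equiv.ofBijective (fun p => ⟨p.2.val, cSegIdx_val_notMem_image hord p.2⟩) <| by
    constructor
    · rintro ⟨i, w, hw⟩ ⟨j, w', hw'⟩ h
      obtain rfl : w = w' := congrArg Subtype.val h
      obtain rfl : i = j := ((cSegIdx_iff_inGap hord i w).mp hw).index_eq_of_wcovBy
        ((cSegIdx_iff_inGap hord j w).mp hw') .rfl
      rfl
    · rintro ⟨w, hw⟩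
      obtain ⟨i, hi⟩ := exists_inGap_of_notMem_image hord hw
      exact ⟨⟨i, w, (cSegIdx_iff_inGap hord i w).mpr hi⟩, rfl⟩

theorem index_eq_of_inGap_add_one {i j : Fin (k + 1)} {w : Fin (N + 1)}
    (hw : InGap (fun l => u l - u 0) i (w - u 0))
    (hw' : InGap (fun l => u l - u 0) j (w + 1 - u 0)) : i = j := by
  rw [add_sub_right_comm] at hw'
  refine hw.index_eq_of_wcovBy hw' ((wcovBy_add_one_or_add_one_eq_zero _).resolve_right fun h => ?_)
  exact (Fin.zero_le _).not_gt (h ▸ hw'.1 0 (Fin.zero_le j))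

theorem apply_eq_zero_of_inGap_of_ne {R : Type*} [Zero R]
    {L : Matrix (Fin (N + 1)) (Fin (N + 1)) R}
    (hfar : ∀ v w, v ≠ w → w ≠ v + 1 → w ≠ v - 1 → L v w = 0) {i j : Fin (k + 1)} (hij : i ≠ j)
    {v w : Fin (N + 1)} (hv : InGap (fun l => u l - u 0) i (v - u 0))
    (hw : InGap (fun l => u l - u 0) j (w - u 0)) : L v w = 0 := by
  refine hfar v w ?_ ?_ ?_
  · rintro rfl
    exact hij (hv.index_eq_of_wcovBy hw .rfl)
  · rintro rfl
    exact hij (index_eq_of_inGap_add_one hv hw)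
  · rintro rfl
    exact hij (index_eq_of_inGap_add_one hw (by rwa [sub_add_cancel])).symm

end RingSegments

theorem det_submatrix_ne_zero_of_ring {N : ℕ} {ι R : Type*} [Fintype ι] [DecidableEq ι]
    [CommRing R] [LinearOrder R] [IsStrictOrderedRing R] {L : Matrix (Fin (N + 1)) (Fin (N + 1)) R}
    (hsucc : ∀ v, L v (v + 1) < 0) (hpred : ∀ v, L v (v - 1) ≤ 0)
    (hfar : ∀ v w, v ≠ w → w ≠ v + 1 → w ≠ v - 1 → L v w = 0) (hrow : ∀ v, 0 ≤ ∑ w, L v w)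
    {f : ι → Fin (N + 1)} (hf : Function.Injective f) {s : Fin (N + 1)} (hs : s ∉ Set.range f) :
    (L.submatrix f f).det ≠ 0 := by
  have hoff (v w : Fin (N + 1)) (hvw : v ≠ w) : L v w ≤ 0 := by
    by_cases hw : w = v + 1
    · exact hw ▸ (hsucc v).le
    by_cases hw' : w = v - 1
    · exact hw' ▸ hpred v
    · exact (hfar v w hvw hw hw').le
  exact det_submatrix_ne_zero_of_reachable hoff hrow hf
    fun v => ⟨s, hs, reflTransGen_of_add_one hsucc v s⟩

theorem ring_coherence_decomposition_general {N k : ℕ} {K : Type*} [Field K] [LinearOrder K]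
    [IsStrictOrderedRing K] (L : Matrix (Fin (N + 1)) (Fin (N + 1)) K)
    (hsucc : ∀ v, L v (v + 1) < 0) (hpred : ∀ v, L v (v - 1) ≤ 0)
    (hfar : ∀ v w, v ≠ w → w ≠ v + 1 → w ≠ v - 1 → L v w = 0) (hrow : ∀ v, 0 ≤ ∑ w, L v w)
    (u : Fin (k + 1) → Fin (N + 1)) (hord : StrictMono fun i => u i - u 0) :
    let Lff := L.submatrix (fun w : {w // w ∉ Finset.image u Finset.univ} => w.val) (·.val)
    let Lseg := fun i => L.submatrix (fun w : CSegIdx (u i) (u (i + 1)) => w.val) (·.val)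
    IsUnit Lff.det ∧ (∀ i, IsUnit (Lseg i).det) ∧
      (1 / 2) * Lff⁻¹.trace = ∑ i, (1 / 2) * (Lseg i)⁻¹.trace := by
  intro Lff Lseg
  have hgap {i} (w : CSegIdx (u i) (u (i + 1))) := (cSegIdx_iff_inGap hord i w.val).mp w.2
  have hground : u 0 ∉ Set.range fun w : {w // w ∉ Finset.image u Finset.univ} => w.val := by
    simp
  have hsegment (i) : u i ∉ Set.range fun w : CSegIdx (u i) (u (i + 1)) => w.val := by
    rintro ⟨w, hw⟩
    exact (hgap w).ne i (congrArg (· - u 0) hw.symm)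
  have hunit (i) : IsUnit (Lseg i).det := isUnit_iff_ne_zero.mpr <|
    det_submatrix_ne_zero_of_ring hsucc hpred hfar hrow Subtype.val_injective (hsegment i)
  refine ⟨isUnit_iff_ne_zero.mpr <|
    det_submatrix_ne_zero_of_ring hsucc hpred hfar hrow Subtype.val_injective hground, hunit, ?_⟩
  rw [← Finset.mul_sum]
  congr 1
  exact trace_inv_eq_sum_trace_inv_blocks Lff (segmentEquiv hord)
    (fun i j hij v w => apply_eq_zero_of_inGap_of_ne hfar hij (hgap v) (hgap w)) hunit

/-- for a weighted ring Laplacian and a nonempty leader set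
`S = {u₀, …, u_k}` listed in clockwise cyclic order (the offsets from `u₀` are strictly
increasing; `u` at index `i + 1` wraps around to `u₀` after `u_k`), the grounded Laplacian
and all cyclic segment submatrices are invertible and `(1/2)·tr(L_ff⁻¹)` is the sum of
the cyclic segment contributions. -/
theorem ring_coherence_decomposition {n k : ℕ}
    (L : Matrix (Fin (n + 3)) (Fin (n + 3)) ℝ) (hL : IsRingLaplacian L)
    (u : Fin (k + 1) → Fin (n + 3))
    (hord : StrictMono fun i : Fin (k + 1) => (u i - u 0).val) :
    IsUnit (grounded L (Finset.image u Finset.univ)).det ∧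
    (∀ i : Fin (k + 1), IsUnit (cseg L (u i) (u (i + 1))).det) ∧
    (1 / 2) * ((grounded L (Finset.image u Finset.univ))⁻¹).trace =
      ∑ i : Fin (k + 1), (1 / 2) * ((cseg L (u i) (u (i + 1)))⁻¹).trace := by
  obtain ⟨-, hadj, hfar, hrow⟩ := hL
  exact ring_coherence_decomposition_general L (fun v => hadj v _ (.inl rfl))
    (fun v => (hadj v _ (.inr rfl)).le) hfar (fun v => (hrow v).ge) u hord
end

section
/- Let n ≥ 3 and let L be a weighted Laplacian of a ring graph on n vertices. Let S = {u₁, u₂, …, u_k} be a nonempty proper subset of the vertices, listed in clockwise (cyclic) order, and set u_{k+1} = u₁. Then λ_min(L_ff) = min over the nonempty cyclic segment submatrices L_{(u_j→u_{j+1})}, j = 1,…,k, of their smallest eigenvalues. -/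
/-!
Removing the leaders from the ring disconnects it: two consecutive leaders enclose one segment,
every remaining vertex lies in exactly one segment, and a step along the ring that avoids the
leaders cannot leave its segment. Up to a relabelling of the vertices the grounded matrix is
therefore block diagonal with the segment matrices as blocks, so its spectrum is the union of
theirs, and the infimum of a union is the infimum of the infima.
-/

open Matrix

/-- The smallest eigenvalue of a real (symmetric) matrix, as the infimum of its spectrum. -/
noncomputable def lambdaMin {m : Type*} [Fintype m] [DecidableEq m]
    (M : Matrix m m ℝ) : ℝ :=
  sInf (spectrum ℝ M)

section Spectrum

variable {R m m' o : Type*} [CommRing R] [Fintype m] [DecidableEq m] [Fintype m'] [DecidableEq m']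
  [Fintype o] [DecidableEq o] {p : o → Type*} [∀ i, Fintype (p i)] [∀ i, DecidableEq (p i)]

lemma spectrum_submatrix_equiv (M : Matrix m m R) (e : m' ≃ m) :
    spectrum R (M.submatrix e e) = spectrum R M :=
  AlgEquiv.spectrum_eq (reindexAlgEquiv R R e.symm) M

lemma blockDiag'_blockDiagonal'_mul {α : Type*} [NonUnitalNonAssocSemiring α]
    {l n q : o → Type*} [∀ i, Fintype (n i)] (M : ∀ i, Matrix (l i) (n i) α)
    (N : Matrix (Σ i, n i) (Σ i, q i) α) (i : o) :
    blockDiag' (blockDiagonal' M * N) i = M i * blockDiag' N i := by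
  ext a b
  simp only [blockDiag'_apply, mul_apply, Fintype.sum_sigma]
  rw [Fintype.sum_eq_single i fun j hj ↦ Finset.sum_eq_zero fun c _ ↦ by
    rw [blockDiagonal'_apply_ne _ _ _ hj.symm, zero_mul]]
  simp only [blockDiagonal'_apply_eq]

lemma isUnit_blockDiagonal'_iff {M : ∀ i, Matrix (p i) (p i) R} :
    IsUnit (blockDiagonal' M) ↔ ∀ i, IsUnit (M i) := by
  refine ⟨fun h i ↦ ?_, fun h ↦ (Pi.isUnit_iff.2 h).map (blockDiagonal'RingHom p R)⟩
  obtain ⟨N, hN⟩ := h.exists_right_inv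
  refine .of_mul_eq_one (blockDiag' N i) ?_
  rw [← blockDiag'_blockDiagonal'_mul, hN, blockDiag'_one, Pi.one_apply]

lemma algebraMap_sub_blockDiagonal' (r : R) (M : ∀ i, Matrix (p i) (p i) R) :
    algebraMap R _ r - blockDiagonal' M = blockDiagonal' fun i ↦ algebraMap R _ r - M i := by
  simp only [Algebra.algebraMap_eq_smul_one, ← blockDiagonal'_one, ← blockDiagonal'_smul,
    ← blockDiagonal'_sub]
  rfl

lemma spectrum_blockDiagonal' (M : ∀ i, Matrix (p i) (p i) R) :
    spectrum R (blockDiagonal' M) = ⋃ i, spectrum R (M i) := by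
  ext r
  simp only [Set.mem_iUnion, spectrum.mem_iff, algebraMap_sub_blockDiagonal',
    isUnit_blockDiagonal'_iff, not_forall]

end Spectrum

section LambdaMin

variable {m m' o : Type*} [Fintype m] [DecidableEq m] [Fintype m'] [DecidableEq m']
  [Fintype o] [DecidableEq o] {p : o → Type*} [∀ i, Fintype (p i)] [∀ i, DecidableEq (p i)]

lemma lambdaMin_submatrix_equiv (M : Matrix m m ℝ) (e : m' ≃ m) :
    lambdaMin (M.submatrix e e) = lambdaMin M :=
  congrArg sInf (spectrum_submatrix_equiv M e)

lemma isLeast_lambdaMin [Nonempty m] {M : Matrix m m ℝ} (hM : M.IsSymm) :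
    IsLeast (spectrum ℝ M) (lambdaMin M) := by
  have hne : (spectrum ℝ M).Nonempty :=
    ⟨_, (isHermitian_iff_isSymm.2 hM).eigenvalues_mem_spectrum_real (Classical.arbitrary m)⟩
  exact ⟨hne.csInf_mem M.finite_spectrum, fun _ ↦ csInf_le M.finite_spectrum.bddBelow⟩

lemma lambdaMin_blockDiagonal' {M : ∀ i, Matrix (p i) (p i) ℝ} (hM : ∀ i, (M i).IsSymm)
    [hp : Nonempty (Σ i, p i)] :
    lambdaMin (blockDiagonal' M) = sInf {x | ∃ i, Nonempty (p i) ∧ x = lambdaMin (M i)} := by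
  obtain ⟨i₀, a₀⟩ := hp
  have hleast (i : {i // Nonempty (p i)}) : IsLeast (spectrum ℝ (M i)) (lambdaMin (M i)) :=
    have := i.2
    isLeast_lambdaMin (hM i)
  have hunion : spectrum ℝ (blockDiagonal' M) =
      ⋃ i : {i // Nonempty (p i)}, spectrum ℝ (M i) := by
    rw [spectrum_blockDiagonal', Set.iUnion_subtype]
    refine Set.iUnion_congr fun i ↦ ?_
    cases isEmpty_or_nonempty (p i) <;> simp [spectrum.of_subsingleton, *]
  have hrange : {x | ∃ i, Nonempty (p i) ∧ x = lambdaMin (M i)} =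
      Set.range fun i : {i // Nonempty (p i)} ↦ lambdaMin (M i) :=
    Set.ext fun _ ↦ ⟨fun ⟨i, hi, hx⟩ ↦ ⟨⟨i, hi⟩, hx.symm⟩, fun ⟨⟨i, hi⟩, hx⟩ ↦ ⟨i, hi, hx.symm⟩⟩
  have hne : (Set.range fun i : {i // Nonempty (p i)} ↦ lambdaMin (M i)).Nonempty :=
    ⟨_, ⟨i₀, ⟨a₀⟩⟩, rfl⟩
  rw [hrange, lambdaMin, hunion]
  exact ((isGLB_iUnion_iff_of_isGLB (fun i ↦ (hleast i).isGLB) _).1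
    (isGLB_csInf hne (Set.finite_range _).bddBelow)).csInf_eq
    ⟨_, Set.mem_iUnion.2 ⟨⟨i₀, ⟨a₀⟩⟩, (hleast _).1⟩⟩

end LambdaMin

section Segments

variable {N : ℕ}

/-- `w` lies strictly between `u` and `v` in clockwise order, that is, on the cyclic segment
`(u → v)`; as for `CSegIdx`, the segment `(u → u)` consists of all vertices other than `u`. -/
def StrictlyBetween (u v w : Fin N) : Prop :=
  0 < (w - u).val ∧ (v = u ∨ (w - u).val < (v - u).val)

/-- `L` is supported on the diagonal and on the edges of the ring on `N` vertices, that is, it is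
a periodic Jacobi (cyclic tridiagonal) matrix; its entries there are arbitrary. -/
def IsCyclicTridiagonal {R : Type*} [Zero R] [NeZero N] (L : Matrix (Fin N) (Fin N) R) : Prop :=
  ∀ i j : Fin N, i ≠ j → j ≠ i + 1 → j ≠ i - 1 → L i j = 0

-- `(y - x).val` is the clockwise distance from `x` to `y`.
lemma val_sub_eq_ite [NeZero N] (u v w : Fin N) :
    (w - v).val = if (v - u).val ≤ (w - u).val then (w - u).val - (v - u).val
      else N + (w - u).val - (v - u).val := by
  rw [← sub_sub_sub_cancel_right w v u]
  split_ifs with h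
  · exact Fin.sub_val_of_le h
  · exact Fin.coe_sub_iff_lt.2 (not_le.1 h)

lemma val_sub_pos [NeZero N] {u w : Fin N} (h : w ≠ u) : 0 < (w - u).val :=
  Nat.pos_of_ne_zero fun h0 ↦ h (sub_eq_zero.1 (Fin.val_eq_zero_iff.1 h0))

lemma val_add_one_sub [NeZero N] {u w : Fin N} (h : w + 1 ≠ u) :
    (w + 1 - u).val = (w - u).val + 1 := by
  have hstep := val_sub_eq_ite u w (w + 1)
  have hpos := val_sub_pos h
  have hlt := (w + 1 - u).isLt
  rw [add_sub_cancel_left, Fin.val_one', Nat.mod_eq_of_lt (by omega)] at hstep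
  split_ifs at hstep <;> omega

namespace StrictlyBetween

variable [NeZero N] {u v w u' v' : Fin N}

lemma add_one (h : StrictlyBetween u v w) (hu : w + 1 ≠ u) (hv : w + 1 ≠ v) :
    StrictlyBetween u v (w + 1) := by
  have hne : (w + 1 - u).val ≠ (v - u).val := fun heq ↦ hv (sub_left_injective (Fin.ext heq))
  have hdist := val_add_one_sub hu
  obtain ⟨-, hvu⟩ := h
  exact ⟨by omega, hvu.imp_right fun _ ↦ by omega⟩

lemma sub_one (h : StrictlyBetween u v w) (hu : w - 1 ≠ u) :
    StrictlyBetween u v (w - 1) := by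
  obtain ⟨h0, hvu⟩ := h
  have hwu : w ≠ u := by rintro rfl; simp at h0
  have hdist := val_add_one_sub (w := w - 1) (u := u) (by rwa [sub_add_cancel])
  rw [sub_add_cancel] at hdist
  exact ⟨val_sub_pos hu, hvu.imp_right fun _ ↦ by omega⟩

-- The starting point nearer to `w` counterclockwise lies inside the other segment.
lemma eq_or_strictlyBetween_left (h : StrictlyBetween u v w) (h' : StrictlyBetween u' v' w) :
    u = u' ∨ StrictlyBetween u v u' ∨ StrictlyBetween u' v' u := by
  rcases eq_or_ne u u' with huu' | huu'
  · exact .inl huu'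
  right
  have hpos := val_sub_pos huu'
  have hpos' := val_sub_pos huu'.symm
  have hdist := val_sub_eq_ite u u' w
  have hback := val_sub_eq_ite u u' u
  rw [sub_self, Fin.val_zero] at hback
  obtain ⟨h0, hv⟩ := h
  obtain ⟨h0', hv'⟩ := h'
  rcases le_or_gt (u' - u).val (w - u).val with hle | hlt
  · rw [if_pos hle] at hdist
    exact .inl ⟨hpos', hv.imp_right fun _ ↦ by omega⟩
  · rw [if_neg hlt.not_ge] at hdist
    rw [if_neg (by omega)] at hback
    exact .inr ⟨hpos, hv'.imp_right fun _ ↦ by omega⟩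

end StrictlyBetween

lemma IsCyclicTridiagonal.apply_eq_zero_of_strictlyBetween [NeZero N] {R : Type*} [Zero R]
    {L : Matrix (Fin N) (Fin N) R} (hL : IsCyclicTridiagonal L) {u v w w' : Fin N}
    (hw : StrictlyBetween u v w) (hw' : ¬ StrictlyBetween u v w') (hu : w' ≠ u) (hv : w' ≠ v) :
    L w w' = 0 :=
  hL w w' (fun h ↦ hw' (h ▸ hw)) (fun h ↦ hw' (h ▸ hw.add_one (h ▸ hu) (h ▸ hv)))
    (fun h ↦ hw' (h ▸ hw.sub_one (h ▸ hu)))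

-- The starting point of a segment containing `w` is the `u i` last passed before reaching `w`.
lemma exists_strictlyBetween [NeZero N] {ι : Type*} [Finite ι] [Nonempty ι] (u : ι → Fin N)
    (σ : ι → ι) {w : Fin N} (hw : w ∉ Set.range u) : ∃ i, StrictlyBetween (u i) (u (σ i)) w := by
  obtain ⟨i, hi⟩ := Finite.exists_min fun j ↦ (w - u j).val
  have hne (j : ι) : w ≠ u j := fun h ↦ hw ⟨j, h.symm⟩
  refine ⟨i, val_sub_pos (hne i), or_iff_not_imp_left.2 fun hσ ↦ ?_⟩
  by_contra! hle
  have hpos := val_sub_pos hσ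
  have hdist := val_sub_eq_ite (u i) (u (σ i)) w
  rw [if_pos hle] at hdist
  have hmin := hi (σ i)
  omega

variable [NeZero N] {k : ℕ} {u : Fin (k + 1) → Fin N}

lemma not_strictlyBetween_of_strictMono (hord : StrictMono fun i ↦ (u i - u 0).val)
    (i j : Fin (k + 1)) : ¬ StrictlyBetween (u i) (u (i + 1)) (u j) := by
  rintro ⟨hpos, hbetween⟩
  have hinj : Function.Injective u := fun a b h ↦ hord.injective (by simp only [h])
  have hji : j ≠ i := by rintro rfl; simp at hpos
  have hj := val_sub_eq_ite (u 0) (u i) (u j)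
  have hnext := val_sub_eq_ite (u 0) (u i) (u (i + 1))
  rcases (Fin.le_last i).eq_or_lt with rfl | hi
  · have hjlast : j < Fin.last k := Fin.lt_last_iff_ne_last.2 hji
    have hlt := hord hjlast
    have hlast := hbetween.resolve_left (hinj.ne (by simpa using (j.zero_le.trans_lt hjlast).ne))
    rw [Fin.last_add_one, sub_self, Fin.val_zero] at hnext
    rw [Fin.last_add_one] at hlast
    grind
  · have hlt := hord (Fin.lt_add_one_iff.2 hi)
    have hdist := hbetween.resolve_left (hinj.ne (Fin.lt_add_one_iff.2 hi).ne')
    rcases lt_or_gt_of_ne hji with hbefore | hafter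
    · have hlt' := hord hbefore
      grind
    · have hle := hord.monotone (Fin.add_one_le_of_lt hafter)
      grind

lemma StrictlyBetween.notMem_image (hord : StrictMono fun i ↦ (u i - u 0).val)
    {i : Fin (k + 1)} {w : Fin N} (h : StrictlyBetween (u i) (u (i + 1)) w) :
    w ∉ Finset.univ.image u := by
  intro hw
  obtain ⟨j, -, rfl⟩ := Finset.mem_image.1 hw
  exact not_strictlyBetween_of_strictMono hord i j h

lemma StrictlyBetween.eq_of_strictMono (hord : StrictMono fun i ↦ (u i - u 0).val)
    {i j : Fin (k + 1)} {w : Fin N} (hi : StrictlyBetween (u i) (u (i + 1)) w)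
    (hj : StrictlyBetween (u j) (u (j + 1)) w) : i = j := by
  rcases hi.eq_or_strictlyBetween_left hj with h | h | h
  · exact hord.injective (by simp only [h])
  · exact (not_strictlyBetween_of_strictMono hord i j h).elim
  · exact (not_strictlyBetween_of_strictMono hord j i h).elim

/-- The cyclic segments between consecutive leaders partition the vertices that are not leaders:
the relabelling that brings the grounded matrix into block diagonal form. -/
noncomputable def segmentsEquiv (hord : StrictMono fun i ↦ (u i - u 0).val) :
    (Σ i, CSegIdx (u i) (u (i + 1))) ≃ {w // w ∉ Finset.univ.image u} :=
  .ofBijective (fun w ↦ ⟨w.2.val, StrictlyBetween.notMem_image hord w.2.property⟩) <| by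
    constructor
    · rintro ⟨i, w, hi⟩ ⟨j, w', hj⟩ h
      obtain rfl : w = w' := congrArg Subtype.val h
      obtain rfl := StrictlyBetween.eq_of_strictMono hord hi hj
      rfl
    · rintro ⟨w, hw⟩
      obtain ⟨i, hi⟩ := exists_strictlyBetween u (· + 1) (w := w) (by simpa using hw)
      exact ⟨⟨i, w, hi⟩, rfl⟩

lemma IsCyclicTridiagonal.grounded_submatrix_segmentsEquiv {L : Matrix (Fin N) (Fin N) ℝ}
    (hL : IsCyclicTridiagonal L) (hord : StrictMono fun i ↦ (u i - u 0).val) :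
    (grounded L (Finset.univ.image u)).submatrix (segmentsEquiv hord) (segmentsEquiv hord) =
      blockDiagonal' fun i ↦ cseg L (u i) (u (i + 1)) := by
  ext ⟨i, w⟩ ⟨j, w'⟩
  rcases eq_or_ne i j with rfl | hij
  · exact (blockDiagonal'_apply_eq (fun i ↦ cseg L (u i) (u (i + 1))) i w w').symm
  · have hleader (l : Fin (k + 1)) : w'.val ≠ u l := fun h ↦
      StrictlyBetween.notMem_image hord w'.property (by simp [h])
    rw [blockDiagonal'_apply_ne _ _ _ hij]
    exact hL.apply_eq_zero_of_strictlyBetween w.property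
      (fun h ↦ hij (h.eq_of_strictMono hord w'.property)) (hleader i) (hleader (i + 1))

end Segments

theorem ring_lambdaMin_decomposition_general {N k : ℕ} [NeZero N]
    (L : Matrix (Fin N) (Fin N) ℝ) (hsymm : L.IsSymm) (hL : IsCyclicTridiagonal L)
    (u : Fin (k + 1) → Fin N)
    (hord : StrictMono fun i : Fin (k + 1) => (u i - u 0).val)
    (hproper : Finset.image u Finset.univ ≠ Finset.univ) :
    lambdaMin (grounded L (Finset.image u Finset.univ)) =
      sInf { x : ℝ | ∃ i : Fin (k + 1),
        Nonempty (CSegIdx (u i) (u (i + 1))) ∧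
        x = lambdaMin (cseg L (u i) (u (i + 1))) } := by
  obtain ⟨w, hw⟩ : ∃ w, w ∉ Finset.image u Finset.univ := by
    simpa only [ne_eq, Finset.eq_univ_iff_forall, not_forall] using hproper
  have : Nonempty (Σ i, CSegIdx (u i) (u (i + 1))) := ⟨(segmentsEquiv hord).symm ⟨w, hw⟩⟩
  rw [← lambdaMin_submatrix_equiv _ (segmentsEquiv hord),
    hL.grounded_submatrix_segmentsEquiv hord]
  exact lambdaMin_blockDiagonal' fun i ↦ hsymm.submatrix _

/-- for a weighted ring Laplacian and a nonempty proper leader set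
`S = {u₀, …, u_k}` listed in clockwise cyclic order, the smallest eigenvalue of the
grounded Laplacian equals the minimum of the smallest eigenvalues of the nonempty cyclic
segment blocks. -/
theorem ring_lambdaMin_decomposition {n k : ℕ}
    (L : Matrix (Fin (n + 3)) (Fin (n + 3)) ℝ) (hL : IsRingLaplacian L)
    (u : Fin (k + 1) → Fin (n + 3))
    (hord : StrictMono fun i : Fin (k + 1) => (u i - u 0).val)
    (hproper : Finset.image u Finset.univ ≠ Finset.univ) :
    lambdaMin (grounded L (Finset.image u Finset.univ)) =
      sInf { x : ℝ | ∃ i : Fin (k + 1),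
        Nonempty (CSegIdx (u i) (u (i + 1))) ∧
        x = lambdaMin (cseg L (u i) (u (i + 1))) } :=
  ring_lambdaMin_decomposition_general L hL.1 hL.2.2.1 u hord hproper
end
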